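/- arXiv:2402.00419 — 4 statements merged into one kernel-verified Lean document; each statement's English description precedes it below -/
import Mathlib

section
/- Let A be an n-dimensional Novikov algebra over ℂ with dim Ann(A) = m ≠ 0, and let V be an m-dimensional ℂ-vector space. Then there exists, up to isomorphism, a unique (n−m)-dimensional Novikov algebra A′ and a cocycle θ ∈ Z²(A′,V) with Ann(A′) ∩ Ann(θ) = 0 such that A ≅ A′_θ and A/Ann(A) ≅ A′. In particular, the quotient A/Ann(A) carries a Novikov algebra structure and A is isomorphic to a central extension of it. -/
/-!
Let `N = Ann(A)`. Both arguments of the product of `A` may be changed by elements of `N` without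
changing the product, so it descends to a bilinear map `μ : A/N × A/N → A`
(`exists_quotient_product`). Choosing a linear retraction `p : A → N` and an isomorphism
`φ : N ≃ V`, the map `a ↦ (a + N, φ (p a))` is a linear isomorphism `A ≃ A/N × V`
(`exists_equiv_quotient_prod`), and its two components applied to `μ` are the product of `A/N` and
the cocycle `θ`. The identities for both are the images of the Novikov identities of `A`, and
`Ann(A/N) ∩ Ann(θ) = 0` because an element of it lifts to an element of `N`.

For uniqueness, if `A ≃ Q' × V` is a central extension with `Ann(Q') ∩ Ann(θ') = 0`, then `N` is
exactly the kernel of the surjective algebra homomorphism `A → Q'` (`mem_ann_iff_fst_eq_zero`).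
-/

/-- The Novikov identities for a (bilinear) multiplication on an additive group. -/
def IsNovikovMul {M : Type*} [AddCommGroup M] (mul : M → M → M) : Prop :=
  (∀ x y z, mul (mul x y) z = mul (mul x z) y) ∧
  (∀ x y z, mul (mul x y) z - mul x (mul y z) = mul (mul y x) z - mul y (mul x z))

/-- The 2-cocycle conditions for a bilinear map `θ : A × A → V`. -/
def IsCocycle {A V : Type*} [AddCommGroup A] [AddCommGroup V]
    (mul : A → A → A) (θ : A → A → V) : Prop :=
  (∀ x y z, θ (mul x y) z = θ (mul x z) y) ∧
  (∀ x y z, θ (mul x y) z - θ x (mul y z) = θ (mul y x) z - θ y (mul x z))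

/-- The annihilator `Ann(A) = {x ∈ A : xA = Ax = 0}` as a submodule. -/
def annSubmodule {A : Type*} [AddCommGroup A] [Module ℂ A]
    (mul : A →ₗ[ℂ] A →ₗ[ℂ] A) : Submodule ℂ A where
  carrier := {x | (∀ a, mul x a = 0) ∧ (∀ a, mul a x = 0)}
  add_mem' := by
    intro x y hx hy
    obtain ⟨hx1, hx2⟩ := hx
    obtain ⟨hy1, hy2⟩ := hy
    exact ⟨fun a => by simp [map_add, hx1 a, hy1 a],
           fun a => by simp [map_add, hx2 a, hy2 a]⟩
  zero_mem' := ⟨fun a => by simp, fun a => by simp⟩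
  smul_mem' := by
    intro c x hx
    obtain ⟨hx1, hx2⟩ := hx
    exact ⟨fun a => by simp [map_smul, hx1 a],
           fun a => by simp [map_smul, hx2 a]⟩

/-- The product of `A` factors through `A/Ann(A)` in both arguments. -/
theorem exists_quotient_product {A : Type*} [AddCommGroup A] [Module ℂ A]
    (mul : A →ₗ[ℂ] A →ₗ[ℂ] A) :
    ∃ μ : (A ⧸ annSubmodule mul) →ₗ[ℂ] (A ⧸ annSubmodule mul) →ₗ[ℂ] A,
      ∀ a b, μ ((annSubmodule mul).mkQ a) ((annSubmodule mul).mkQ b) = mul a b := by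
  obtain ⟨s, hs⟩ := (annSubmodule mul).mkQ.exists_rightInverse_of_surjective
    (annSubmodule mul).range_mkQ
  have key : ∀ a, s ((annSubmodule mul).mkQ a) - a ∈ annSubmodule mul := by
    intro a
    refine (Submodule.Quotient.mk_eq_zero _).1 ?_
    rw [Submodule.Quotient.mk_sub, sub_eq_zero]
    exact LinearMap.congr_fun hs _
  refine ⟨mul.compl₁₂ s s, fun a b => ?_⟩
  have h1 := (key a).1 (s ((annSubmodule mul).mkQ b))
  have h2 := (key b).2 a
  rw [map_sub, LinearMap.sub_apply, sub_eq_zero] at h1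
  rw [map_sub, sub_eq_zero] at h2
  rw [LinearMap.compl₁₂_apply, h1, h2]

/-- An identification of a subspace `N` with `V` extends to a splitting `A ≃ A/N × V` over the
quotient map. -/
theorem exists_equiv_quotient_prod {A V : Type*} [AddCommGroup A] [Module ℂ A]
    [AddCommGroup V] [Module ℂ V] (N : Submodule ℂ A) (φ : N ≃ₗ[ℂ] V) :
    ∃ e : A ≃ₗ[ℂ] (A ⧸ N) × V, ∀ a, (e a).1 = N.mkQ a := by
  obtain ⟨p, hp⟩ := N.subtype.exists_leftInverse_of_injective N.ker_subtype
  have hp' : ∀ x : N, p x = x := fun x => LinearMap.congr_fun hp x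
  refine ⟨LinearEquiv.ofBijective (N.mkQ.prod (φ.toLinearMap ∘ₗ p)) ⟨?_, ?_⟩, fun a => rfl⟩
  · rw [injective_iff_map_eq_zero]
    intro a ha
    have h1 : N.mkQ a = 0 := congrArg Prod.fst ha
    have h2 : φ (p a) = 0 := congrArg Prod.snd ha
    have haN : a ∈ N := by rwa [← LinearMap.mem_ker, Submodule.ker_mkQ] at h1
    rw [φ.map_eq_zero_iff] at h2
    have h3 := hp' ⟨a, haN⟩
    rw [h2] at h3
    exact (congrArg Subtype.val h3).symm
  · rintro ⟨q, v⟩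
    obtain ⟨a, rfl⟩ := N.mkQ_surjective q
    refine ⟨a + ((φ.symm v - p a : N) : A), Prod.ext ?_ ?_⟩
    · have : N.mkQ ((φ.symm v - p a : N) : A) = 0 := by
        rw [← LinearMap.mem_ker, Submodule.ker_mkQ]
        exact (φ.symm v - p a).2
      change N.mkQ (a + ((φ.symm v - p a : N) : A)) = N.mkQ a
      rw [map_add, this, add_zero]
    · change φ (p (a + ((φ.symm v - p a : N) : A))) = v
      rw [map_add, hp', add_sub_cancel, φ.apply_symm_apply]

/-- In a central extension `A ≃ Q' × V` with `Ann(Q') ∩ Ann(θ') = 0`, the annihilator of `A`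
corresponds to the summand `V`. -/
theorem mem_ann_iff_fst_eq_zero {A Q' V : Type*} [AddCommGroup A] [Module ℂ A]
    [AddCommGroup Q'] [Module ℂ Q'] [AddCommGroup V] [Module ℂ V]
    (mul : A →ₗ[ℂ] A →ₗ[ℂ] A)
    (mulQ' : Q' →ₗ[ℂ] Q' →ₗ[ℂ] Q') (θ' : Q' →ₗ[ℂ] Q' →ₗ[ℂ] V)
    (hann : ∀ q : Q', ((∀ a, mulQ' q a = 0) ∧ (∀ a, mulQ' a q = 0)) →
      ((∀ a, θ' q a = 0) ∧ (∀ a, θ' a q = 0)) → q = 0)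
    (e' : A ≃ₗ[ℂ] Q' × V)
    (he' : ∀ a b : A, e' (mul a b) = (mulQ' (e' a).1 (e' b).1, θ' (e' a).1 (e' b).1)) (a : A) :
    a ∈ annSubmodule mul ↔ (e' a).1 = 0 := by
  constructor
  · rintro ⟨h1, h2⟩
    have l : ∀ q, (mulQ' (e' a).1 q, θ' (e' a).1 q) = 0 := by
      intro q
      have := he' a (e'.symm (q, 0))
      rwa [h1, map_zero, e'.apply_symm_apply, eq_comm] at this
    have r : ∀ q, (mulQ' q (e' a).1, θ' q (e' a).1) = 0 := by
      intro q
      have := he' (e'.symm (q, 0)) a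
      rwa [h2, map_zero, e'.apply_symm_apply, eq_comm] at this
    exact hann _ ⟨fun q => congrArg Prod.fst (l q), fun q => congrArg Prod.fst (r q)⟩
      ⟨fun q => congrArg Prod.snd (l q), fun q => congrArg Prod.snd (r q)⟩
  · intro h
    constructor <;> intro b <;> apply e'.injective <;> rw [he', h] <;> simp

/-- an `n`-dimensional Novikov algebra `A` over ℂ with `dim Ann(A) = m ≠ 0`
is, in an essentially unique way, a central extension of the `(n−m)`-dimensional
Novikov algebra `A′ = A/Ann(A)` by an `m`-dimensional space `V`, via a cocycle `θ`
with `Ann(A′) ∩ Ann(θ) = 0`. -/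
theorem novikov_is_central_extension_of_quotient
    {A : Type*} [AddCommGroup A] [Module ℂ A] [FiniteDimensional ℂ A]
    (mul : A →ₗ[ℂ] A →ₗ[ℂ] A) (hA : IsNovikovMul fun x y => mul x y)
    (n m : ℕ) (hn : Module.finrank ℂ A = n)
    (hm : Module.finrank ℂ (annSubmodule mul) = m) (hm0 : m ≠ 0)
    (V : Type*) [AddCommGroup V] [Module ℂ V] (hV : Module.finrank ℂ V = m) :
    ∃ (mulQ : (A ⧸ annSubmodule mul) →ₗ[ℂ] (A ⧸ annSubmodule mul) →ₗ[ℂ] (A ⧸ annSubmodule mul))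
      (θ : (A ⧸ annSubmodule mul) →ₗ[ℂ] (A ⧸ annSubmodule mul) →ₗ[ℂ] V),
      -- `A′ = A/Ann(A)` is a Novikov algebra of dimension `n − m`, and the natural
      -- projection `A → A′` is an algebra homomorphism:
      IsNovikovMul (fun x y => mulQ x y) ∧
      Module.finrank ℂ (A ⧸ annSubmodule mul) = n - m ∧
      (∀ a b : A, (annSubmodule mul).mkQ (mul a b) =
        mulQ ((annSubmodule mul).mkQ a) ((annSubmodule mul).mkQ b)) ∧
      -- `θ` is a cocycle with `Ann(A′) ∩ Ann(θ) = 0`: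
      IsCocycle (fun x y => mulQ x y) (fun x y => θ x y) ∧
      (∀ q : A ⧸ annSubmodule mul,
        ((∀ a, mulQ q a = 0) ∧ (∀ a, mulQ a q = 0)) →
        ((∀ a, θ q a = 0) ∧ (∀ a, θ a q = 0)) → q = 0) ∧
      -- `A ≅ A′_θ`:
      (∃ e : A ≃ₗ[ℂ] (A ⧸ annSubmodule mul) × V,
        ∀ a b : A, e (mul a b) = (mulQ (e a).1 (e b).1, θ (e a).1 (e b).1)) ∧
      -- uniqueness up to isomorphism: any other Novikov algebra `Q′` obtained this way
      -- is isomorphic (as an algebra) to `A′ = A/Ann(A)`: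
      (∀ (Q' : Type) (_ : AddCommGroup Q') (_ : Module ℂ Q')
        (mulQ' : Q' →ₗ[ℂ] Q' →ₗ[ℂ] Q') (θ' : Q' →ₗ[ℂ] Q' →ₗ[ℂ] V),
        IsNovikovMul (fun x y => mulQ' x y) →
        IsCocycle (fun x y => mulQ' x y) (fun x y => θ' x y) →
        (∀ q : Q', ((∀ a, mulQ' q a = 0) ∧ (∀ a, mulQ' a q = 0)) →
          ((∀ a, θ' q a = 0) ∧ (∀ a, θ' a q = 0)) → q = 0) →
        (∃ e' : A ≃ₗ[ℂ] Q' × V,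
          ∀ a b : A, e' (mul a b) = (mulQ' (e' a).1 (e' b).1, θ' (e' a).1 (e' b).1)) →
        ∃ g : (A ⧸ annSubmodule mul) ≃ₗ[ℂ] Q',
          ∀ p q : A ⧸ annSubmodule mul, g (mulQ p q) = mulQ' (g p) (g q)) := by
  have : FiniteDimensional ℂ V := Module.finite_of_finrank_pos (by omega)
  obtain ⟨μ, hμ⟩ := exists_quotient_product mul
  obtain ⟨e, he⟩ := exists_equiv_quotient_prod (annSubmodule mul)
    (LinearEquiv.ofFinrankEq (annSubmodule mul) V (hm.trans hV.symm))
  have hsurj := (annSubmodule mul).mkQ_surjective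
  have hmulQ : ∀ a b, (μ.compr₂ (annSubmodule mul).mkQ) ((annSubmodule mul).mkQ a)
      ((annSubmodule mul).mkQ b) = (annSubmodule mul).mkQ (mul a b) := by
    intro a b
    rw [LinearMap.compr₂_apply, hμ]
  have hθ : ∀ a b, (μ.compr₂ (LinearMap.snd ℂ _ V ∘ₗ e.toLinearMap)) ((annSubmodule mul).mkQ a)
      ((annSubmodule mul).mkQ b) = (e (mul a b)).2 := by
    intro a b
    rw [LinearMap.compr₂_apply, hμ]
    rfl
  generalize μ.compr₂ (annSubmodule mul).mkQ = mulQ at hmulQ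
  generalize μ.compr₂ (LinearMap.snd ℂ _ V ∘ₗ e.toLinearMap) = θ at hθ
  refine ⟨mulQ, θ, ⟨?_, ?_⟩, ?_, fun a b => (hmulQ a b).symm, ⟨?_, ?_⟩, ?_, ⟨e, ?_⟩, ?_⟩
  · intro x y z
    obtain ⟨a, rfl⟩ := hsurj x
    obtain ⟨b, rfl⟩ := hsurj y
    obtain ⟨c, rfl⟩ := hsurj z
    simp only [hmulQ]
    exact congrArg _ (hA.1 a b c)
  · intro x y z
    obtain ⟨a, rfl⟩ := hsurj x
    obtain ⟨b, rfl⟩ := hsurj y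
    obtain ⟨c, rfl⟩ := hsurj z
    simp only [hmulQ, ← map_sub]
    exact congrArg _ (hA.2 a b c)
  · have := (annSubmodule mul).finrank_quotient_add_finrank
    omega
  · intro x y z
    obtain ⟨a, rfl⟩ := hsurj x
    obtain ⟨b, rfl⟩ := hsurj y
    obtain ⟨c, rfl⟩ := hsurj z
    simp only [hmulQ, hθ]
    exact congrArg (fun t => (e t).2) (hA.1 a b c)
  · intro x y z
    obtain ⟨a, rfl⟩ := hsurj x
    obtain ⟨b, rfl⟩ := hsurj y
    obtain ⟨c, rfl⟩ := hsurj z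
    simp only [hmulQ, hθ, ← Prod.snd_sub, ← map_sub]
    exact congrArg (fun t => (e t).2) (hA.2 a b c)
  · rintro q ⟨h1, h2⟩ ⟨h3, h4⟩
    obtain ⟨a, rfl⟩ := hsurj q
    rw [← LinearMap.mem_ker, Submodule.ker_mkQ]
    -- both components of `e (mul a b)` and of `e (mul b a)` vanish
    constructor <;> intro b <;> rw [← e.map_eq_zero_iff] <;> apply Prod.ext
    · rw [he, ← hmulQ, h1]; rfl
    · rw [← hθ, h3]; rfl
    · rw [he, ← hmulQ, h2]; rfl
    · rw [← hθ, h4]; rfl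
  · intro a b
    apply Prod.ext
    · simp only [he, hmulQ]
    · simp only [he, hθ]
  · rintro Q' _ _ mulQ' θ' - - hann ⟨e', he'⟩
    have hker : annSubmodule mul = LinearMap.ker (LinearMap.fst ℂ Q' V ∘ₗ e'.toLinearMap) :=
      Submodule.ext fun a => mem_ann_iff_fst_eq_zero mul mulQ' θ' hann e' he' a
    have hs : Function.Surjective (LinearMap.fst ℂ Q' V ∘ₗ e'.toLinearMap) :=
      Prod.fst_surjective.comp e'.surjective
    let g := (Submodule.quotEquivOfEq _ _ hker).trans
      (LinearMap.quotKerEquivOfSurjective _ hs)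
    have hg : ∀ a, g ((annSubmodule mul).mkQ a) = (e' a).1 := fun a => rfl
    refine ⟨g, fun p q => ?_⟩
    obtain ⟨a, rfl⟩ := hsurj p
    obtain ⟨b, rfl⟩ := hsurj q
    rw [hmulQ, hg, hg, hg, he']
end

section
/- Let A be a finite-dimensional Novikov algebra over ℂ, let V be an s-dimensional ℂ-vector space with basis e₁,…,e_s, and let θ ∈ Z²(A,V) be written θ(x,y) = Σᵢ θᵢ(x,y)eᵢ with θᵢ ∈ Z²(A,ℂ). Assume Ann(θ) ∩ Ann(A) = 0. Then the central extension A_θ has an annihilator component if and only if the cohomology classes [θ₁], [θ₂], …, [θ_s] are linearly dependent in H²(A,ℂ). -/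
/-- An algebra `(B, mul)` has an annihilator component if there are a nonzero subspace
`I` contained in the annihilator and a subalgebra `B₀` with `B = B₀ ⊕ I`. -/
def HasAnnihilatorComponent {B : Type*} [AddCommGroup B] [Module ℂ B]
    (mul : B → B → B) : Prop :=
  ∃ I B₀ : Submodule ℂ B, I ≠ ⊥ ∧
    (∀ x ∈ I, ∀ b : B, mul x b = 0 ∧ mul b x = 0) ∧
    (∀ x ∈ B₀, ∀ y ∈ B₀, mul x y ∈ B₀) ∧
    IsCompl B₀ I

/-- for a finite-dimensional Novikov algebra `A` over ℂ and a cocycle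
`θ = Σ θᵢ eᵢ : A × A → ℂˢ` with `Ann(θ) ∩ Ann(A) = 0`, the central extension `A_θ`
has an annihilator component if and only if the classes `[θ₁], …, [θ_s]` are linearly
dependent in `H²(A,ℂ)`, i.e. some nontrivial linear combination of the `θᵢ` is a
coboundary. -/
theorem hasAnnihilatorComponent_iff_dependent
    {A : Type*} [AddCommGroup A] [Module ℂ A] [FiniteDimensional ℂ A]
    (mul : A →ₗ[ℂ] A →ₗ[ℂ] A) (hA : IsNovikovMul fun x y => mul x y)
    (s : ℕ) (θ : A →ₗ[ℂ] A →ₗ[ℂ] (Fin s → ℂ))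
    (hθ : IsCocycle (fun x y => mul x y) (fun x y => θ x y))
    (hann : ∀ x : A, ((∀ a, mul x a = 0) ∧ (∀ a, mul a x = 0)) →
        ((∀ a, θ x a = 0) ∧ (∀ a, θ a x = 0)) → x = 0) :
    HasAnnihilatorComponent
        (fun p q : A × (Fin s → ℂ) => ((mul p.1 q.1, θ p.1 q.1) : A × (Fin s → ℂ))) ↔
      ∃ c : Fin s → ℂ, c ≠ 0 ∧ ∃ f : A →ₗ[ℂ] ℂ,
        ∀ x y : A, (∑ i, c i * θ x y i) = f (mul x y) := by
  constructor
  · rintro ⟨I, B₀, hI, hIann, hB₀, hc⟩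
    obtain ⟨⟨x₀, v⟩, hwI, hw0⟩ := Submodule.exists_mem_ne_zero_of_ne_bot hI
    have hx₀ : x₀ = 0 := by
      have h := fun a : A => hIann _ hwI (a, 0)
      simp only [Prod.mk_eq_zero] at h
      exact hann x₀ ⟨fun a => (h a).1.1, fun a => (h a).2.1⟩
        ⟨fun a => (h a).1.2, fun a => (h a).2.2⟩
    subst hx₀
    have hwB : ((0, v) : A × (Fin s → ℂ)) ∉ B₀ := fun h =>
      hw0 (Submodule.disjoint_def.1 hc.disjoint _ h hwI)
    obtain ⟨φ, hφv, hφB⟩ := Submodule.exists_le_ker_of_notMem hwB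
    -- Components along `I` do not contribute to a product, so all products lie in `B₀`.
    have hprod : ∀ x y : A, ((mul x y, θ x y) : A × (Fin s → ℂ)) ∈ B₀ := by
      intro x y
      have hdec : ∀ p : A × (Fin s → ℂ), ∃ b ∈ B₀, ∃ i ∈ I, b + i = p := fun p =>
        Submodule.mem_sup.1 (hc.sup_eq_top ▸ Submodule.mem_top)
      obtain ⟨b, hb, i, hi, hbi⟩ := hdec (x, 0)
      obtain ⟨b', hb', j, hj, hbj⟩ := hdec (y, 0)
      have hx : x = b.1 + i.1 := congrArg Prod.fst hbi.symm
      have hy : y = b'.1 + j.1 := congrArg Prod.fst hbj.symm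
      have h1 := (hIann i hi b').1
      have h2 := (hIann i hi j).1
      have h3 := (hIann j hj b).2
      simp only [Prod.mk_eq_zero] at h1 h2 h3
      have h4 := hB₀ b hb b' hb'
      simpa [hx, hy, h1, h2, h3] using h4
    have hsum : ∀ u : Fin s → ℂ, φ (0, u) = ∑ i, φ (0, Pi.single i 1) * u i := by
      intro u
      have h := LinearMap.pi_apply_eq_sum_univ (φ ∘ₗ LinearMap.inr ℂ A (Fin s → ℂ)) u
      simp only [LinearMap.comp_apply, LinearMap.inr_apply, smul_eq_mul] at h
      rw [h]
      refine Finset.sum_congr rfl fun i _ => ?_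
      rw [mul_comm]
      congr 4
      ext j
      simp [Pi.single_apply, eq_comm]
    refine ⟨fun i => φ (0, Pi.single i 1), ?_, -(φ ∘ₗ LinearMap.inl ℂ A (Fin s → ℂ)), ?_⟩
    · intro h
      apply hφv
      rw [hsum]
      exact Finset.sum_eq_zero fun i _ => by rw [show φ (0, Pi.single i 1) = 0 from congrFun h i,
        zero_mul]
    · intro x y
      have h0 : φ (mul x y, θ x y) = 0 := hφB (hprod x y)
      have hsplit : φ (mul x y, θ x y) = φ (mul x y, 0) + φ (0, θ x y) := by
        rw [← map_add]; simp
      rw [← hsum]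
      simp only [LinearMap.neg_apply, LinearMap.comp_apply, LinearMap.inl_apply]
      linear_combination h0 - hsplit
  · rintro ⟨c, hc, f, hf⟩
    obtain ⟨k, hk⟩ := Function.ne_iff.1 hc
    let g : (Fin s → ℂ) →ₗ[ℂ] ℂ := ∑ i, c i • LinearMap.proj i
    have hg : ∀ u, g u = ∑ i, c i * u i := fun u => by simp [g]
    let φ : A × (Fin s → ℂ) →ₗ[ℂ] ℂ := g ∘ₗ LinearMap.snd ℂ _ _ - f ∘ₗ LinearMap.fst ℂ _ _
    let w : A × (Fin s → ℂ) := (0, Pi.single k 1)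
    have hφw : φ w ≠ 0 := by
      simpa [φ, w, hg, Pi.single_apply] using hk
    have hw : w ≠ 0 := fun h => hφw (by rw [h, map_zero])
    refine ⟨ℂ ∙ w, LinearMap.ker φ, by simpa using hw, ?_, ?_, ?_⟩
    · intro x hx b
      obtain ⟨a, rfl⟩ := Submodule.mem_span_singleton.1 hx
      simp [w]
    · intro x _ y _
      simp [φ, hg, hf]
    · refine ⟨Submodule.disjoint_span_singleton_of_notMem hφw, ?_⟩
      rw [codisjoint_iff, sup_comm]
      exact φ.span_singleton_sup_ker_eq_top hφw
end

section
/- Let A be a finite-dimensional Novikov algebra over ℂ and V an s-dimensional ℂ-vector space with basis e₁,…,e_s. Let θ, ϑ ∈ Z²(A,V) be written θ(x,y) = Σᵢ θᵢ(x,y)eᵢ and ϑ(x,y) = Σᵢ ϑᵢ(x,y)eᵢ with θᵢ, ϑᵢ ∈ Z²(A,ℂ); assume Ann(θ) ∩ Ann(A) = 0 = Ann(ϑ) ∩ Ann(A) and that [θ₁],…,[θ_s] are linearly independent in H²(A,ℂ), and likewise [ϑ₁],…,[ϑ_s]. Then the central extensions A_θ and A_ϑ are isomorphic as ℂ-algebras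 if and only if there exists an algebra automorphism φ of A such that the span of [φθ₁],…,[φθ_s] in H²(A,ℂ) equals the span of [ϑ₁],…,[ϑ_s], where φθᵢ(x,y) := θᵢ(φ(x),φ(y)). -/
/-- A linear isomorphism of central extensions `A_θ ≃ A_η` with `Ann(η) ∩ Ann(A) = 0` maps the
central summand `0 × V` into `0 × W`: its image annihilates `A_η`. -/
lemma fst_eq_zero_of_hom {A V W : Type*} [AddCommGroup A] [Module ℂ A]
    [AddCommGroup V] [Module ℂ V] [AddCommGroup W] [Module ℂ W]
    (mul : A →ₗ[ℂ] A →ₗ[ℂ] A) (θ : A →ₗ[ℂ] A →ₗ[ℂ] V) (η : A →ₗ[ℂ] A →ₗ[ℂ] W)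
    (hannη : ∀ x : A, ((∀ a, mul x a = 0) ∧ (∀ a, mul a x = 0)) →
        ((∀ a, η x a = 0) ∧ (∀ a, η a x = 0)) → x = 0)
    (e : (A × V) ≃ₗ[ℂ] (A × W))
    (he : ∀ p q : A × V, e (mul p.1 q.1, θ p.1 q.1) = (mul (e p).1 (e q).1, η (e p).1 (e q).1))
    (v : V) : (e (0, v)).1 = 0 := by
  have hl : ∀ a, (mul (e (0, v)).1 a, η (e (0, v)).1 a) = (0 : A × W) := fun a => by
    have h := he (0, v) (e.symm (a, 0))
    have h0 : ((0 : A), (0 : V)) = 0 := rfl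
    simpa [h0] using h.symm
  have hr : ∀ a, (mul a (e (0, v)).1, η a (e (0, v)).1) = (0 : A × W) := fun a => by
    have h := he (e.symm (a, 0)) (0, v)
    have h0 : ((0 : A), (0 : V)) = 0 := rfl
    simpa [h0] using h.symm
  exact hannη _ ⟨fun a => congrArg Prod.fst (hl a), fun a => congrArg Prod.fst (hr a)⟩
    ⟨fun a => congrArg Prod.snd (hl a), fun a => congrArg Prod.snd (hr a)⟩

lemma exists_coeff {s : ℕ} (L : (Fin s → ℂ) →ₗ[ℂ] (Fin s → ℂ)) (i : Fin s) :
    ∃ c : Fin s → ℂ, ∀ v, L v i = ∑ j, c j * v j := by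
  refine ⟨fun j => L (fun k => if j = k then 1 else 0) i, fun v => ?_⟩
  have h := congrFun (L.pi_apply_eq_sum_univ v) i
  simpa [mul_comm] using h

/-- let `A` be a finite-dimensional Novikov algebra over ℂ and let
`θ = Σ θᵢ eᵢ` and `η = Σ ηᵢ eᵢ` be cocycles `A × A → ℂˢ` whose components have
linearly independent cohomology classes and with `Ann(θ) ∩ Ann(A) = 0 = Ann(η) ∩ Ann(A)`.
Then the central extensions `A_θ` and `A_η` are isomorphic as ℂ-algebras if and only if
there is an algebra automorphism `φ` of `A` with
`span([φθ₁],…,[φθ_s]) = span([η₁],…,[η_s])` in `H²(A,ℂ)` (expressed below by mutual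
containment modulo coboundaries). -/
theorem central_extensions_isomorphic_iff
    {A : Type*} [AddCommGroup A] [Module ℂ A] [FiniteDimensional ℂ A]
    (mul : A →ₗ[ℂ] A →ₗ[ℂ] A) (hA : IsNovikovMul fun x y => mul x y)
    (s : ℕ) (θ η : A →ₗ[ℂ] A →ₗ[ℂ] (Fin s → ℂ))
    (hθ : IsCocycle (fun x y => mul x y) (fun x y => θ x y))
    (hη : IsCocycle (fun x y => mul x y) (fun x y => η x y))
    (hannθ : ∀ x : A, ((∀ a, mul x a = 0) ∧ (∀ a, mul a x = 0)) →
        ((∀ a, θ x a = 0) ∧ (∀ a, θ a x = 0)) → x = 0)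
    (hannη : ∀ x : A, ((∀ a, mul x a = 0) ∧ (∀ a, mul a x = 0)) →
        ((∀ a, η x a = 0) ∧ (∀ a, η a x = 0)) → x = 0)
    (hindθ : ∀ c : Fin s → ℂ,
        (∃ f : A →ₗ[ℂ] ℂ, ∀ x y : A, (∑ i, c i * θ x y i) = f (mul x y)) → c = 0)
    (hindη : ∀ c : Fin s → ℂ,
        (∃ f : A →ₗ[ℂ] ℂ, ∀ x y : A, (∑ i, c i * η x y i) = f (mul x y)) → c = 0) :
    (∃ e : (A × (Fin s → ℂ)) ≃ₗ[ℂ] (A × (Fin s → ℂ)),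
        ∀ p q : A × (Fin s → ℂ),
          e ((mul p.1 q.1, θ p.1 q.1)) = ((mul (e p).1 (e q).1, η (e p).1 (e q).1))) ↔
      ∃ φ : A ≃ₗ[ℂ] A, (∀ a b : A, φ (mul a b) = mul (φ a) (φ b)) ∧
        (∀ i : Fin s, ∃ (c : Fin s → ℂ) (f : A →ₗ[ℂ] ℂ),
            ∀ x y : A, θ (φ x) (φ y) i = (∑ j, c j * η x y j) + f (mul x y)) ∧
        (∀ i : Fin s, ∃ (c : Fin s → ℂ) (f : A →ₗ[ℂ] ℂ),
            ∀ x y : A, η x y i = (∑ j, c j * θ (φ x) (φ y) j) + f (mul x y)) := by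
  constructor
  · rintro ⟨e, he⟩
    have hz := fst_eq_zero_of_hom mul θ η hannη e he
    let ψ₀ : (Fin s → ℂ) →ₗ[ℂ] (Fin s → ℂ) :=
      LinearMap.snd ℂ A _ ∘ₗ e.toLinearMap ∘ₗ LinearMap.inr ℂ A _
    have hψ₀ : ∀ v, e (0, v) = (0, ψ₀ v) := fun v => Prod.ext (hz v) rfl
    have hψinj : Function.Injective ψ₀ := fun v w h => by
      have : e (0, v) = e (0, w) := by rw [hψ₀, hψ₀, h]
      exact congrArg Prod.snd (e.injective this)
    let ψ := LinearEquiv.ofInjectiveEndo ψ₀ hψinj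
    have hψ : ∀ v, e (0, v) = (0, ψ v) := hψ₀
    let φ₀ : A →ₗ[ℂ] A := LinearMap.fst ℂ A _ ∘ₗ e.toLinearMap ∘ₗ LinearMap.inl ℂ A _
    let f : A →ₗ[ℂ] (Fin s → ℂ) :=
      LinearMap.snd ℂ A _ ∘ₗ e.toLinearMap ∘ₗ LinearMap.inl ℂ A _
    have hφinj : Function.Injective φ₀ := by
      rw [← LinearMap.ker_eq_bot, LinearMap.ker_eq_bot']
      intro a ha
      have h1 : e (a, 0) = e (0, ψ.symm (f a)) := by
        rw [hψ, LinearEquiv.apply_symm_apply]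
        exact Prod.ext ha rfl
      exact congrArg Prod.fst (e.injective h1)
    let φ := LinearEquiv.ofInjectiveEndo φ₀ hφinj
    have hφ : ∀ a, e (a, 0) = (φ a, f a) := fun a => rfl
    have hsplit : ∀ a v, e (a, v) = (φ a, f a + ψ v) := fun a v => by
      have : ((a, v) : A × (Fin s → ℂ)) = (a, 0) + (0, v) := by simp
      rw [this, map_add, hφ, hψ]; simp
    have hmain : ∀ a b, φ (mul a b) = mul (φ a) (φ b) ∧
        f (mul a b) + ψ (θ a b) = η (φ a) (φ b) := fun a b => by
      have h := he (a, 0) (b, 0)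
      rw [hsplit, hφ, hφ] at h
      exact ⟨congrArg Prod.fst h, congrArg Prod.snd h⟩
    have hsymm : ∀ a b, φ.symm (mul a b) = mul (φ.symm a) (φ.symm b) := fun a b => by
      rw [LinearEquiv.symm_apply_eq, (hmain _ _).1]; simp
    have hη' : ∀ x y, η x y = ψ (θ (φ.symm x) (φ.symm y)) + f (φ.symm (mul x y)) :=
      fun x y => by
        have h := (hmain (φ.symm x) (φ.symm y)).2
        rw [hsymm, add_comm, h]; simp
    refine ⟨φ.symm, hsymm, fun i => ?_, fun i => ?_⟩
    · obtain ⟨c, hc⟩ := exists_coeff ψ.symm.toLinearMap i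
      refine ⟨c, -(LinearMap.proj i ∘ₗ ψ.symm.toLinearMap ∘ₗ f ∘ₗ φ.symm.toLinearMap),
        fun x y => ?_⟩
      rw [← hc, hη']
      simp
    · obtain ⟨c, hc⟩ := exists_coeff ψ.toLinearMap i
      refine ⟨c, LinearMap.proj i ∘ₗ f ∘ₗ φ.symm.toLinearMap, fun x y => ?_⟩
      rw [← hc, hη']
      simp
  · rintro ⟨φ, hφ, h1, h2⟩
    choose D g hD using h1
    choose C f hC using h2
    have hCD : (Matrix.of C) * (Matrix.of D) = 1 := by
      ext i k
      -- Row `i` of `C D - 1` exhibits a linear combination of the `ηₖ` that is a coboundary.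
      have h := hindη (fun k => (Matrix.of C * Matrix.of D) i k - (1 : Matrix _ _ ℂ) i k)
        ⟨-(f i + ∑ j, C i j • g j), fun x y => by
          have h3 := hC i x y
          simp only [hD] at h3
          simp only [sub_mul, Finset.sum_sub_distrib, Matrix.mul_apply, Matrix.of_apply,
            Finset.sum_mul, Matrix.one_apply, ite_mul, one_mul, zero_mul, Finset.sum_ite_eq,
            Finset.mem_univ, if_true]
          rw [Finset.sum_comm, h3]
          simp only [mul_add, Finset.sum_add_distrib, Finset.mul_sum, LinearMap.neg_apply,
            LinearMap.add_apply, LinearMap.sum_apply, LinearMap.smul_apply, smul_eq_mul, mul_assoc]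
          ring⟩
      exact sub_eq_zero.mp (congrFun h k)
    -- The inverse matrix comes first: `Matrix.toLin'OfInv` acts by its second matrix, here `C`.
    let ψ : (Fin s → ℂ) ≃ₗ[ℂ] (Fin s → ℂ) :=
      Matrix.toLin'OfInv (mul_eq_one_comm.mp hCD) hCD
    have hψ : ∀ v i, ψ v i = ∑ j, C i j * v j := fun v i => by
      change Matrix.toLin' (Matrix.of C) v i = _
      simp [Matrix.mulVec, dotProduct]
    refine ⟨φ.symm.skewProd ψ (LinearMap.pi f ∘ₗ φ.symm.toLinearMap), fun p q => ?_⟩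
    have hsymm : φ.symm (mul p.1 q.1) = mul (φ.symm p.1) (φ.symm q.1) := by
      rw [LinearEquiv.symm_apply_eq, hφ]; simp
    refine Prod.ext hsymm (funext fun i => ?_)
    simp [hψ, hC, hsymm]
end

section
/- Let 𝔑₀₁ be the 4-dimensional ℂ-algebra with basis e₁, e₂, e₃, e₄ and multiplication determined by e₁e₁ = e₂ (all other products of basis vectors zero). A linear map φ : 𝔑₀₁ → 𝔑₀₁ is an algebra automorphism if and only if there exist scalars x, q, w, z, r, t, y, u, k, l ∈ ℂ with x ≠ 0 and tl − ky ≠ 0 such that φ(e₁) = x e₁ + q e₂ + w e₃ + z e₄, φ(e₂) = x² e₂, φ(e₃) = r e₂ + t e₃ + y e₄, and φ(e₄) = u e₂ + k e₃ + l e₄. -/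
/-!
The product of `a` and `b` is `(a₁ b₁) e₂`. A multiplicative injective `φ` thus sends `e₂ = e₁e₁`
to `x² e₂`, where `x` is the `e₁`-coordinate of `φ e₁`, and injectivity forces `x ≠ 0`. As `e₃` and
`e₄` square to zero, so do their images, whose `e₁`-coordinates therefore vanish. If the block
determinant `tl - ky` were zero, then `φ` would send a nontrivial combination of `e₃, e₄` into
`ℂ e₂ = φ (ℂ e₂)`, against injectivity. Conversely, in coordinates `φ` is block triangular with
determinant `x³ (tl - ky)`, and multiplicativity only involves the `e₁`-coordinate, which `φ`
multiplies by `x`.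
-/

noncomputable section

abbrev AA : Type := Fin 4 → ℂ

/-- The 4-dimensional algebra 𝔑₀₁ with `e₁e₁ = e₂` (all other products zero),
in 0-indexed coordinates. -/
def theMul : AA →ₗ[ℂ] AA →ₗ[ℂ] AA :=
  LinearMap.mk₂ ℂ (fun x y => ![0, x 0 * y 0, 0, 0])
    (fun a b c => by funext i; fin_cases i <;> simp <;> ring)
    (fun s a b => by funext i; fin_cases i <;> simp <;> ring)
    (fun a b c => by funext i; fin_cases i <;> simp <;> ring)
    (fun s a b => by funext i; fin_cases i <;> simp <;> ring)

/-- The standard basis vector `eᵢ` (0-indexed). -/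
def e (i : Fin 4) : AA := Pi.single i 1

lemma theMul_apply (a b : AA) : theMul a b = (a 0 * b 0) • e 1 := by
  funext i
  fin_cases i <;> simp [theMul, e]

lemma expand (v : AA) : v = v 0 • e 0 + v 1 • e 1 + v 2 • e 2 + v 3 • e 3 := by
  funext i
  fin_cases i <;> simp [e]

lemma map_expand (φ : AA →ₗ[ℂ] AA) (v : AA) :
    φ v = v 0 • φ (e 0) + v 1 • φ (e 1) + v 2 • φ (e 2) + v 3 • φ (e 3) := by
  conv_lhs => rw [expand v]
  simp only [map_add, map_smul]

/-- If `φ` is injective, preserves the line `ℂ e₂` (scaling it by `c ≠ 0`), and sends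
`a e₃ + b e₄` into that line, then `a = b = 0`. -/
lemma coeff_eq_zero (φ : AA →ₗ[ℂ] AA) (hinj : Function.Injective φ) {c a b d : ℂ} (hc : c ≠ 0)
    (h1 : φ (e 1) = c • e 1) (h : a • φ (e 2) + b • φ (e 3) = d • e 1) : a = 0 ∧ b = 0 := by
  have key : φ (a • e 2 + b • e 3) = φ ((d / c) • e 1) := by
    simp only [map_add, map_smul, h, h1, smul_smul, div_mul_cancel₀ d hc]
  have hv := hinj key
  exact ⟨by simpa [e] using congrFun hv 2, by simpa [e] using congrFun hv 3⟩

/-- a linear map `φ : 𝔑₀₁ → 𝔑₀₁` is an algebra automorphism if and only if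
there exist scalars `x q w z r t y u k l` with `x ≠ 0` and `t·l − k·y ≠ 0` such that
`φ(e₁) = x e₁ + q e₂ + w e₃ + z e₄`, `φ(e₂) = x² e₂`, `φ(e₃) = r e₂ + t e₃ + y e₄`
and `φ(e₄) = u e₂ + k e₃ + l e₄`. -/
theorem statement6 (φ : AA →ₗ[ℂ] AA) :
    (Function.Bijective φ ∧ ∀ a b : AA, φ (theMul a b) = theMul (φ a) (φ b)) ↔
      ∃ x q w z r t y u k l : ℂ, x ≠ 0 ∧ t * l - k * y ≠ 0 ∧
        φ (e 0) = x • e 0 + q • e 1 + w • e 2 + z • e 3 ∧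
        φ (e 1) = (x ^ 2) • e 1 ∧
        φ (e 2) = r • e 1 + t • e 2 + y • e 3 ∧
        φ (e 3) = u • e 1 + k • e 2 + l • e 3 := by
  constructor
  · rintro ⟨⟨hinj, -⟩, hmul⟩
    have h1 : φ (e 1) = (φ (e 0) 0 ^ 2) • e 1 := by
      have := hmul (e 0) (e 0)
      rw [theMul_apply, theMul_apply] at this
      simpa [e, sq] using this
    have hx : φ (e 0) 0 ≠ 0 := by
      intro h0
      have h2 : φ (e 1) = φ 0 := by rw [h1, h0]; simp
      simpa [e] using congrFun (hinj h2) 1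
    have hsq : ∀ v : AA, v 0 = 0 → φ v 0 = 0 := by
      intro v hv
      have := hmul v v
      rw [theMul_apply, theMul_apply, hv] at this
      simpa [e] using congrFun this 1
    have h2 : φ (e 2) = φ (e 2) 1 • e 1 + φ (e 2) 2 • e 2 + φ (e 2) 3 • e 3 := by
      conv_lhs => rw [expand (φ (e 2)), hsq (e 2) (by simp [e]), zero_smul, zero_add]
    have h3 : φ (e 3) = φ (e 3) 1 • e 1 + φ (e 3) 2 • e 2 + φ (e 3) 3 • e 3 := by
      conv_lhs => rw [expand (φ (e 3)), hsq (e 3) (by simp [e]), zero_smul, zero_add]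
    refine ⟨_, _, _, _, _, _, _, _, _, _, hx, ?_, expand _, h1, h2, h3⟩
    intro hdet
    generalize φ (e 2) 1 = r at *
    generalize φ (e 2) 2 = t at *
    generalize φ (e 2) 3 = y at *
    generalize φ (e 3) 1 = u at *
    generalize φ (e 3) 2 = k at *
    generalize φ (e 3) 3 = l at *
    have hx2 := pow_ne_zero 2 hx
    -- The rows of the adjugate of the singular block give combinations landing in the line of `e 1`.
    obtain ⟨hl, -⟩ := coeff_eq_zero φ hinj (a := l) (b := -y) (d := l * r - y * u) hx2 h1 (by
      rw [h2, h3]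
      linear_combination (norm := module) hdet • e 2)
    obtain ⟨hk, -⟩ := coeff_eq_zero φ hinj (a := k) (b := -t) (d := k * r - t * u) hx2 h1 (by
      rw [h2, h3]
      linear_combination (norm := module) (-hdet) • e 3)
    -- Now `φ (e 3)` itself lies in the line of `e 1`.
    have := coeff_eq_zero φ hinj (a := 0) (b := 1) (d := u) hx2 h1 (by
      rw [h3, hl, hk]; simp)
    exact one_ne_zero this.2
  · rintro ⟨x, q, w, z, r, t, y, u, k, l, hx, hd, h0, h1, h2, h3⟩
    have hφ0 : ∀ v, φ v 0 = x * v 0 := by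
      intro v; rw [map_expand, h0, h1, h2, h3]; simp [e]; ring
    have hφ1 : ∀ v, φ v 1 = q * v 0 + x ^ 2 * v 1 + r * v 2 + u * v 3 := by
      intro v; rw [map_expand, h0, h1, h2, h3]; simp [e]; ring
    have hφ2 : ∀ v, φ v 2 = w * v 0 + t * v 2 + k * v 3 := by
      intro v; rw [map_expand, h0, h1, h2, h3]; simp [e]; ring
    have hφ3 : ∀ v, φ v 3 = z * v 0 + y * v 2 + l * v 3 := by
      intro v; rw [map_expand, h0, h1, h2, h3]; simp [e]; ring
    have hinj : Function.Injective φ := by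
      rw [injective_iff_map_eq_zero]
      intro v hv
      have a0 := hφ0 v
      have a1 := hφ1 v
      have a2 := hφ2 v
      have a3 := hφ3 v
      simp only [hv, Pi.zero_apply] at a0 a1 a2 a3
      have v0 : v 0 = 0 := by simpa [hx] using a0.symm
      rw [v0] at a1 a2 a3
      have v2 : v 2 = 0 := by
        apply (mul_eq_zero.1 (_ : (t * l - k * y) * v 2 = 0)).resolve_left hd
        linear_combination k * a3 - l * a2
      have v3 : v 3 = 0 := by
        apply (mul_eq_zero.1 (_ : (t * l - k * y) * v 3 = 0)).resolve_left hd
        linear_combination y * a2 - t * a3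
      rw [v2, v3] at a1
      have v1 : v 1 = 0 := by simpa [hx] using a1.symm
      rw [expand v, v0, v1, v2, v3]
      simp
    refine ⟨⟨hinj, LinearMap.injective_iff_surjective.1 hinj⟩, fun a b => ?_⟩
    rw [theMul_apply, theMul_apply, map_smul, h1, smul_smul, hφ0, hφ0]
    congr 1
    ring

end
end
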